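/- arXiv:2604.03510 — 3 statements merged into one kernel-verified Lean document; each statement's English description precedes it below -/
import Mathlib

section
/- Let φ : ℝ² → ℝ be convex, positively 1-homogeneous, and differentiable at every nonzero point. Then for every unit vector ν ∈ S¹, the point ∇φ(ν) belongs to the topological frontier of the Wulff shape W_φ; i.e. ∇φ(S¹) ⊆ ∂W_φ. -/
open scoped RealInnerProductSpace

/-- The Wulff shape of an anisotropic density `φ` on `ℝ²`:
`W_φ = {x : ⟪x, y⟫ ≤ φ(y) for all unit vectors y}`. -/
def WulffShape (φ : EuclideanSpace ℝ (Fin 2) → ℝ) : Set (EuclideanSpace ℝ (Fin 2)) :=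
  {x | ∀ y : EuclideanSpace ℝ (Fin 2), ‖y‖ = 1 → ⟪x, y⟫ ≤ φ y}

/-!
At a point `ν` where `φ` is differentiable, convexity puts the graph of `φ` above its tangent plane,
and Euler's identity `⟪∇φ(ν), ν⟫ = φ(ν)` makes that plane pass through the origin. Hence
`⟪∇φ(ν), y⟫ ≤ φ(y)` for every `y`, with equality at `y = ν`. So `∇φ(ν)` lies in the Wulff shape and
maximizes over it the nonzero functional `⟪ν, ·⟫`, which cannot happen at an interior point.
-/

section LineDeriv

variable {E : Type*} [AddCommGroup E] [Module ℝ E]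

theorem add_le_of_convexOn_of_hasLineDerivAt {s : Set E} {f : E → ℝ} {f' : ℝ} {x y : E}
    (hf : ConvexOn ℝ s f) (hx : x ∈ s) (hy : y ∈ s) (hf' : HasLineDerivAt ℝ f f' x (y - x)) :
    f x + f' ≤ f y := by
  have hline (t : ℝ) : AffineMap.lineMap x y t = x + t • (y - x) := by
    rw [AffineMap.lineMap_apply_module', add_comm]
  have hderiv : HasDerivAt (f ∘ AffineMap.lineMap (k := ℝ) x y) f' 0 := by
    simpa only [HasLineDerivAt, Function.comp_def, hline] using hf'
  have hslope := (hf.comp_affineMap (AffineMap.lineMap x y)).le_slope_of_hasDerivAt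
    (by simpa using hx) (by simpa using hy) one_pos hderiv
  simp only [slope_def_field, Function.comp_apply, AffineMap.lineMap_apply_zero,
    AffineMap.lineMap_apply_one, sub_zero, div_one] at hslope
  linarith

theorem euler_identity_of_hasLineDerivAt {F : Type*} [NormedAddCommGroup F] [NormedSpace ℝ F]
    {f : E → F} {f' : F} {x : E} {p : ℝ} (hf : ∀ c : ℝ, 0 < c → f (c • x) = c ^ p • f x)
    (hf' : HasLineDerivAt ℝ f f' x x) : f' = p • f x := by
  have hpow : HasDerivAt (fun t : ℝ ↦ (1 + t) ^ p • f x) (p • f x) 0 := by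
    simpa using (((hasDerivAt_id (0 : ℝ)).const_add 1).rpow_const (p := p)
      (by simp)).smul_const (f x)
  refine hf'.unique (hpow.congr_of_eventuallyEq ?_)
  filter_upwards [lt_mem_nhds (show (-1 : ℝ) < 0 by norm_num)] with t ht
  rw [← hf (1 + t) (by linarith), add_smul, one_smul]

end LineDeriv

theorem mem_frontier_of_isMaxOn_of_hasFDerivAt {E : Type*} [NormedAddCommGroup E] [NormedSpace ℝ E]
    {s : Set E} {f : E → ℝ} {f' : E →L[ℝ] ℝ} {x : E} (hx : x ∈ s) (hmax : IsMaxOn f s x)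
    (hf : HasFDerivAt f f' x) (hf' : f' ≠ 0) : x ∈ frontier s :=
  ⟨subset_closure hx, fun hint ↦
    hf' ((hmax.isLocalMax (mem_interior_iff_mem_nhds.mp hint)).hasFDerivAt_eq_zero hf)⟩

section WulffSet

variable {E : Type*} [NormedAddCommGroup E] [InnerProductSpace ℝ E]

/-- The Wulff shape of a density `φ` on a real inner product space, of which `WulffShape` is the
planar case. -/
def wulffSet (φ : E → ℝ) : Set E :=
  {x | ∀ y : E, ‖y‖ = 1 → ⟪x, y⟫ ≤ φ y}

variable {φ : E → ℝ} {x ν : E}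

theorem mem_wulffSet_iff_forall_inner_le (hhom : ∀ c : ℝ, 0 < c → ∀ x : E, φ (c • x) = c * φ x) :
    x ∈ wulffSet φ ↔ ∀ y : E, ⟪x, y⟫ ≤ φ y := by
  refine ⟨fun hx y ↦ ?_, fun hx y _ ↦ hx y⟩
  rcases eq_or_ne y 0 with rfl | hy
  · have hzero : φ 0 = 2 * φ 0 := by simpa using hhom 2 two_pos 0
    rw [inner_zero_right]
    linarith
  · have hunit := hx (‖y‖⁻¹ • y) (norm_smul_inv_norm hy)
    rw [real_inner_smul_right, hhom _ (by positivity)] at hunit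
    exact le_of_mul_le_mul_left hunit (by positivity)

theorem mem_frontier_wulffSet_of_inner_eq
    (hhom : ∀ c : ℝ, 0 < c → ∀ x : E, φ (c • x) = c * φ x) (hν : ν ≠ 0)
    (hx : x ∈ wulffSet φ) (hxν : ⟪x, ν⟫ = φ ν) : x ∈ frontier (wulffSet φ) := by
  have hmax : IsMaxOn (innerSL ℝ ν) (wulffSet φ) x := fun z hz ↦ by
    simpa only [Set.mem_ofPred_eq, innerSL_apply_apply, real_inner_comm, hxν] using
      (mem_wulffSet_iff_forall_inner_le hhom).mp hz ν
  have hne : innerSL ℝ ν ≠ 0 := by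
    rwa [← norm_ne_zero_iff, innerSL_apply_norm, norm_ne_zero_iff]
  exact mem_frontier_of_isMaxOn_of_hasFDerivAt hx hmax (innerSL ℝ ν).hasFDerivAt hne

variable [CompleteSpace E]

theorem hasLineDerivAt_inner_gradient (hdiff : DifferentiableAt ℝ φ ν) (y : E) :
    HasLineDerivAt ℝ φ ⟪gradient φ ν, y⟫ ν y := by
  simpa only [InnerProductSpace.toDual_apply_apply] using
    hdiff.hasGradientAt.hasFDerivAt.hasLineDerivAt y

theorem inner_gradient_self_of_posHomogeneous (hhom : ∀ c : ℝ, 0 < c → φ (c • ν) = c * φ ν)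
    (hdiff : DifferentiableAt ℝ φ ν) : ⟪gradient φ ν, ν⟫ = φ ν := by
  simpa using euler_identity_of_hasLineDerivAt (p := 1) (by simpa using hhom)
    (hasLineDerivAt_inner_gradient hdiff ν)

theorem gradient_mem_wulffSet (hconv : ConvexOn ℝ Set.univ φ)
    (hhom : ∀ c : ℝ, 0 < c → φ (c • ν) = c * φ ν) (hdiff : DifferentiableAt ℝ φ ν) :
    gradient φ ν ∈ wulffSet φ := by
  intro y _
  have htangent : φ ν + ⟪gradient φ ν, y - ν⟫ ≤ φ y :=
    add_le_of_convexOn_of_hasLineDerivAt hconv (Set.mem_univ ν) (Set.mem_univ y)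
      (hasLineDerivAt_inner_gradient hdiff (y - ν))
  rwa [inner_sub_right, inner_gradient_self_of_posHomogeneous hhom hdiff,
    add_sub_cancel] at htangent

theorem gradient_mem_frontier_wulffShape_general (hconv : ConvexOn ℝ Set.univ φ)
    (hhom : ∀ c : ℝ, 0 < c → ∀ x : E, φ (c • x) = c * φ x) (hν : ν ≠ 0)
    (hdiff : DifferentiableAt ℝ φ ν) : gradient φ ν ∈ frontier (wulffSet φ) :=
  have hhomν (c : ℝ) (hc : 0 < c) : φ (c • ν) = c * φ ν := hhom c hc ν
  mem_frontier_wulffSet_of_inner_eq hhom hν (gradient_mem_wulffSet hconv hhomν hdiff)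
    (inner_gradient_self_of_posHomogeneous hhomν hdiff)

end WulffSet

/-- If `φ : ℝ² → ℝ` is convex, positively 1-homogeneous and differentiable away from `0`,
then the gradient of `φ` at any unit vector lies on the frontier of the Wulff shape:
`∇φ(S¹) ⊆ ∂W_φ`. -/
theorem gradient_mem_frontier_wulffShape
    (φ : EuclideanSpace ℝ (Fin 2) → ℝ)
    (hconv : ConvexOn ℝ Set.univ φ)
    (hhom : ∀ c : ℝ, 0 < c → ∀ x : EuclideanSpace ℝ (Fin 2), φ (c • x) = c * φ x)
    (hdiff : ∀ x : EuclideanSpace ℝ (Fin 2), x ≠ 0 → DifferentiableAt ℝ φ x) :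
    ∀ ν : EuclideanSpace ℝ (Fin 2), ‖ν‖ = 1 →
      gradient φ ν ∈ frontier (WulffShape φ) := by
  intro ν hν
  have hν₀ : ν ≠ 0 := ne_zero_of_norm_ne_zero (hν ▸ one_ne_zero)
  exact gradient_mem_frontier_wulffShape_general hconv hhom hν₀ (hdiff ν hν₀)
end

section
/- Let φ : ℝ² → ℝ be convex, positively 1-homogeneous, positive on nonzero vectors, differentiable at every nonzero point, and assume the sublevel set {x ∈ ℝ² : φ(x) ≤ 1} is strictly convex. Then the gradient map ν ↦ ∇φ(ν) is injective on the unit sphere S¹. -/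
open scoped RealInnerProductSpace

/-! Suppose `φ` has the same derivative `p` at the points `a` and `b`. Rescaling a point does not
change the derivative of a homogeneous function, so both points may be moved to the level set
`{φ = 1}`. There `φ` is maximal on the convex set `K = {φ ≤ 1}`, so its derivative `p` is maximal
on `K` as well, while Euler's relation `p a = φ a` shows that `p ≠ 0`. A nonzero linear functional
has at most one maximizer on a strictly convex set, so the rescaled points agree and the original
ones span the same ray. -/

section TopologicalVectorSpace

variable {E : Type*} [AddCommGroup E] [Module ℝ E] [TopologicalSpace E] [ContinuousAdd E]
  [ContinuousSMul ℝ E] {K : Set E} {f : StrongDual ℝ E} {x y : E}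

theorem not_isMaxOn_of_mem_interior (hf : f ≠ 0) (hx : x ∈ interior K) : ¬IsMaxOn f K x := by
  intro hmax
  have himage : f '' K ∈ nhds (f x) :=
    (f.isOpenMap_of_ne_zero hf).image_mem_nhds (mem_interior_iff_mem_nhds.1 hx)
  have hIic : Set.Iic (f x) ∈ nhds (f x) :=
    Filter.mem_of_superset himage (Set.image_subset_iff.2 hmax)
  simpa [interior_Iic] using mem_interior_iff_mem_nhds.2 hIic

theorem eq_of_isMaxOn_of_strictConvex (hK : StrictConvex ℝ K) (hf : f ≠ 0) (hx : x ∈ K)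
    (hy : y ∈ K) (hxmax : IsMaxOn f K x) (hymax : IsMaxOn f K y) : x = y := by
  by_contra hne
  have hmid : midpoint ℝ x y ∈ interior K :=
    hK.openSegment_subset hx hy hne (midpoint_mem_openSegment x y)
  have hfxy : f x = f y := le_antisymm (hymax hx) (hxmax hy)
  have hfmid : f (midpoint ℝ x y) = f x := by
    rw [midpoint_eq_smul_add, map_smul, map_add, ← hfxy, smul_eq_mul, invOf_eq_inv]
    ring
  exact not_isMaxOn_of_mem_interior hf hmid fun z hz ↦ (hxmax hz).trans_eq hfmid.symm

end TopologicalVectorSpace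

theorem isMaxOn_of_convex_of_hasFDerivAt {E : Type*} [NormedAddCommGroup E] [NormedSpace ℝ E]
    {K : Set E} {φ : E → ℝ} {p : StrongDual ℝ E} {x : E} (hK : Convex ℝ K) (hx : x ∈ K)
    (hmax : IsMaxOn φ K x) (hp : HasFDerivAt φ p x) : IsMaxOn p K x := by
  intro y hy
  have hnonpos : p (y - x) ≤ 0 :=
    hmax.localize.hasFDerivWithinAt_nonpos hp.hasFDerivWithinAt
      (sub_mem_posTangentConeAt_of_segment_subset (hK.segment_subset hx hy))
  rwa [map_sub, sub_nonpos] at hnonpos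

/-- Positive homogeneity of degree one, the standing assumption on an anisotropic density. -/
def IsPosHomogeneous {E : Type*} [SMul ℝ E] (φ : E → ℝ) : Prop :=
  ∀ c : ℝ, 0 < c → ∀ x : E, φ (c • x) = c * φ x

namespace IsPosHomogeneous

theorem apply_inv_smul_self {E : Type*} [SMul ℝ E] {φ : E → ℝ} {a : E}
    (hφ : IsPosHomogeneous φ) (ha : 0 < φ a) : φ ((φ a)⁻¹ • a) = 1 := by
  rw [hφ _ (inv_pos.2 ha), inv_mul_cancel₀ ha.ne']

variable {E : Type*} [NormedAddCommGroup E] [NormedSpace ℝ E] {φ : E → ℝ}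
  {p : StrongDual ℝ E} {a b : E}

theorem hasFDerivAt_smul (hφ : IsPosHomogeneous φ) (hp : HasFDerivAt φ p a) {c : ℝ}
    (hc : 0 < c) : HasFDerivAt φ p (c • a) := by
  have hcomp : HasFDerivAt (fun x ↦ φ (c • x)) (c • p) a := by
    simpa only [hφ c hc] using hp.const_mul c
  rwa [← hasFDerivWithinAt_univ, hasFDerivWithinAt_comp_smul_smul_iff,
    Set.smul_set_univ₀ hc.ne', hasFDerivWithinAt_univ] at hcomp

theorem apply_self_of_hasFDerivAt (hφ : IsPosHomogeneous φ) (hp : HasFDerivAt φ p a) :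
    p a = φ a := by
  have hray : HasDerivAt (fun t : ℝ ↦ φ (t • a)) (p a) 1 := by
    have hline : HasDerivAt (fun t : ℝ ↦ t • a) a 1 := by
      simpa only [one_smul, id_eq] using (hasDerivAt_id (1 : ℝ)).smul_const a
    exact HasFDerivAt.comp_hasDerivAt (1 : ℝ) (by rwa [one_smul]) hline
  have hlinear : HasDerivAt (fun t : ℝ ↦ t * φ a) (φ a) 1 := hasDerivAt_mul_const (φ a)
  refine hray.unique (hlinear.congr_of_eventuallyEq ?_)
  filter_upwards [lt_mem_nhds one_pos] with t ht using hφ t ht a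

theorem isMaxOn_inv_smul_of_hasFDerivAt (hφ : IsPosHomogeneous φ) (hK : Convex ℝ {x | φ x ≤ 1})
    (hp : HasFDerivAt φ p a) (ha : 0 < φ a) : IsMaxOn p {x | φ x ≤ 1} ((φ a)⁻¹ • a) := by
  have hone : φ ((φ a)⁻¹ • a) = 1 := hφ.apply_inv_smul_self ha
  exact isMaxOn_of_convex_of_hasFDerivAt hK hone.le (fun x hx ↦ hx.trans_eq hone.symm)
    (hφ.hasFDerivAt_smul hp (inv_pos.2 ha))

theorem sameRay_of_hasFDerivAt (hφ : IsPosHomogeneous φ) (hK : StrictConvex ℝ {x | φ x ≤ 1})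
    (hpa : HasFDerivAt φ p a) (hpb : HasFDerivAt φ p b) (ha : 0 < φ a) (hb : 0 < φ b) :
    SameRay ℝ a b := by
  have hp : p ≠ 0 := by
    rintro rfl
    exact ha.ne (hφ.apply_self_of_hasFDerivAt hpa)
  have heq : (φ a)⁻¹ • a = (φ b)⁻¹ • b :=
    eq_of_isMaxOn_of_strictConvex hK hp (hφ.apply_inv_smul_self ha).le
      (hφ.apply_inv_smul_self hb).le (hφ.isMaxOn_inv_smul_of_hasFDerivAt hK.convex hpa ha)
      (hφ.isMaxOn_inv_smul_of_hasFDerivAt hK.convex hpb hb)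
  exact .inr <| .inr ⟨_, _, inv_pos.2 ha, inv_pos.2 hb, heq⟩

end IsPosHomogeneous

theorem gradient_injOn_sphere_general {E : Type*} [NormedAddCommGroup E] [InnerProductSpace ℝ E]
    [CompleteSpace E] {φ : E → ℝ} (hφ : IsPosHomogeneous φ) (hpos : ∀ x, x ≠ 0 → 0 < φ x)
    (hdiff : ∀ x, x ≠ 0 → DifferentiableAt ℝ φ x) (hK : StrictConvex ℝ {x | φ x ≤ 1}) :
    Set.InjOn (gradient φ) (Metric.sphere 0 1) := by
  intro a ha b hb hab
  have ha₀ : a ≠ 0 := ne_zero_of_mem_unit_sphere ⟨a, ha⟩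
  have hb₀ : b ≠ 0 := ne_zero_of_mem_unit_sphere ⟨b, hb⟩
  have hgrad : HasGradientAt φ (gradient φ a) b := hab ▸ (hdiff b hb₀).hasGradientAt
  have hray : SameRay ℝ a b := hφ.sameRay_of_hasFDerivAt hK
    (hdiff a ha₀).hasGradientAt.hasFDerivAt hgrad.hasFDerivAt (hpos a ha₀) (hpos b hb₀)
  exact hray.eq_of_norm_eq (by rw [mem_sphere_zero_iff_norm.1 ha, mem_sphere_zero_iff_norm.1 hb])

/-- If `φ : ℝ² → ℝ` is convex, positively 1-homogeneous, positive on nonzero vectors,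
differentiable away from `0`, and its unit sublevel set `{φ ≤ 1}` is strictly convex,
then the gradient map `ν ↦ ∇φ(ν)` is injective on the unit sphere. -/
theorem gradient_injOn_sphere
    (φ : EuclideanSpace ℝ (Fin 2) → ℝ)
    (hconv : ConvexOn ℝ Set.univ φ)
    (hhom : ∀ c : ℝ, 0 < c → ∀ x : EuclideanSpace ℝ (Fin 2), φ (c • x) = c * φ x)
    (hpos : ∀ x : EuclideanSpace ℝ (Fin 2), x ≠ 0 → 0 < φ x)
    (hdiff : ∀ x : EuclideanSpace ℝ (Fin 2), x ≠ 0 → DifferentiableAt ℝ φ x)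
    (hstrict : StrictConvex ℝ {x : EuclideanSpace ℝ (Fin 2) | φ x ≤ 1}) :
    Set.InjOn (gradient φ) {ν : EuclideanSpace ℝ (Fin 2) | ‖ν‖ = 1} := by
  simpa only [Metric.sphere, dist_zero_right] using
    gradient_injOn_sphere_general hhom hpos hdiff hstrict
end

section
/- Let φ : ℝ² → ℝ be continuous, positively 1-homogeneous, and positive on S¹. Then a point x belongs to the topological frontier ∂W_φ of the Wulff shape if and only if x ∈ W_φ and there exists a unit vector ν ∈ S¹ with ⟪x, ν⟫ = φ(ν); i.e. the boundary points of W_φ are exactly those points of W_φ at which some defining inequality is an equality. -/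
open scoped RealInnerProductSpace

/-!
For `y ≠ 0` the interior of the half-space `⟪x, y⟫ ≤ φ y` is the open half-space `⟪x, y⟫ < φ y`, so
an interior point of a Wulff shape satisfies every defining inequality strictly. Conversely, since
the normals range over a compact set, a point satisfying all of them strictly has a neighbourhood on
which they all persist. The Wulff shape is closed, so its frontier is what remains: the points of
the shape at which some inequality is an equality.
-/

open Filter Metric Set Topology

/-- The Wulff shape of a density `φ` prescribed only on a set `K` of normals, in any real inner
product space: the intersection of the half-spaces `⟪x, y⟫ ≤ φ y` over `y ∈ K`. The usual Wulff
shape is the case where `K` is the unit sphere. -/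
def wulffShapeOn {E : Type*} [NormedAddCommGroup E] [InnerProductSpace ℝ E] (K : Set E)
    (φ : E → ℝ) : Set E :=
  {x | ∀ y ∈ K, ⟪x, y⟫ ≤ φ y}

theorem isOpen_setOfPred_forall_mem_lt_of_isCompact {X Y γ : Type*} [TopologicalSpace X]
    [TopologicalSpace Y] [Preorder γ] {K : Set Y} {F : X × Y → γ} (hK : IsCompact K)
    (hF : LowerSemicontinuousOn F (univ ×ˢ K)) (c : γ) :
    IsOpen {x | ∀ y ∈ K, c < F (x, y)} := by
  refine isOpen_iff_mem_nhds.2 fun x hx ↦ ?_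
  have hnear : ∀ y ∈ K, ∀ᶠ z : X × Y in 𝓝 (x, y), z.2 ∈ K → c < F (z.1, z.2) := fun y hy ↦ by
    simpa only [eventually_nhdsWithin_iff, mem_prod, mem_univ, true_and]
      using hF (x, y) ⟨mem_univ x, hy⟩ c (hx y hy)
  filter_upwards [hK.eventually_forall_of_forall_eventually
    (P := fun x y ↦ y ∈ K → c < F (x, y)) hnear] with x' hx' y hy
  exact hx' y hy hy

theorem interior_setOfPred_continuousLinearMap_le {𝕜 V : Type*} [Field 𝕜] [LinearOrder 𝕜]
    [IsStrictOrderedRing 𝕜] [TopologicalSpace 𝕜] [OrderTopology 𝕜] [AddCommGroup V]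
    [TopologicalSpace V] [ContinuousAdd V] [Module 𝕜 V] [ContinuousSMul 𝕜 V]
    {ℓ : V →L[𝕜] 𝕜} (hℓ : ℓ ≠ 0) (c : 𝕜) :
    interior {x | ℓ x ≤ c} = {x | ℓ x < c} := by
  have hpre := (ℓ.isOpenMap_of_ne_zero hℓ).preimage_interior_eq_interior_preimage
    ℓ.continuous (Iic c)
  rw [interior_Iic] at hpre
  exact hpre.symm

section InnerProductSpace

variable {E : Type*} [NormedAddCommGroup E] [InnerProductSpace ℝ E] {K : Set E} {φ : E → ℝ}

theorem isClosed_wulffShapeOn (K : Set E) (φ : E → ℝ) : IsClosed (wulffShapeOn K φ) := by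
  simp only [wulffShapeOn, ofPred_forall]
  exact isClosed_biInter fun y _ ↦ isClosed_le (by fun_prop) continuous_const

theorem isOpen_setOfPred_forall_mem_inner_lt (hK : IsCompact K) (hφ : LowerSemicontinuousOn φ K) :
    IsOpen {x | ∀ y ∈ K, ⟪x, y⟫ < φ y} := by
  have hφ' : LowerSemicontinuousOn (fun p : E × E ↦ φ p.2) (univ ×ˢ K) :=
    hφ.comp continuous_snd.continuousOn fun _ hp ↦ hp.2
  have hinner : Continuous fun p : E × E ↦ -⟪p.1, p.2⟫ := by fun_prop
  have hsum := hφ'.add (hinner.lowerSemicontinuous.lowerSemicontinuousOn _)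
  simpa only [← sub_eq_add_neg, sub_pos] using isOpen_setOfPred_forall_mem_lt_of_isCompact hK hsum 0

theorem interior_setOfPred_inner_le {y : E} (hy : y ≠ 0) (c : ℝ) :
    interior {x : E | ⟪x, y⟫ ≤ c} = {x | ⟪x, y⟫ < c} := by
  have hy' : innerSL ℝ y ≠ 0 := norm_ne_zero_iff.1 <| by
    simpa only [innerSL_apply_norm, norm_ne_zero_iff] using hy
  simpa only [innerSL_apply_apply, real_inner_comm _ y] using
    interior_setOfPred_continuousLinearMap_le hy' c

theorem interior_wulffShapeOn (hK : IsCompact K) (hK₀ : 0 ∉ K) (hφ : LowerSemicontinuousOn φ K) :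
    interior (wulffShapeOn K φ) = {x | ∀ y ∈ K, ⟪x, y⟫ < φ y} := by
  refine Subset.antisymm (fun x hx y hy ↦ ?_) ?_
  · have hsub : wulffShapeOn K φ ⊆ {x | ⟪x, y⟫ ≤ φ y} := fun _ hz ↦ hz y hy
    have hxy : x ∈ interior {x | ⟪x, y⟫ ≤ φ y} := interior_mono hsub hx
    rwa [interior_setOfPred_inner_le (ne_of_mem_of_not_mem hy hK₀)] at hxy
  · exact interior_maximal (fun x hx y hy ↦ (hx y hy).le)
      (isOpen_setOfPred_forall_mem_inner_lt hK hφ)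

theorem mem_frontier_wulffShape_iff_general (hK : IsCompact K) (hK₀ : 0 ∉ K)
    (hφ : LowerSemicontinuousOn φ K) (x : E) :
    x ∈ frontier (wulffShapeOn K φ) ↔ x ∈ wulffShapeOn K φ ∧ ∃ ν ∈ K, ⟪x, ν⟫ = φ ν := by
  rw [(isClosed_wulffShapeOn K φ).frontier_eq, interior_wulffShapeOn hK hK₀ hφ, Set.mem_sdiff]
  refine and_congr_right fun hx ↦ ?_
  have hlt_iff : ∀ y ∈ K, (⟪x, y⟫ < φ y ↔ ⟪x, y⟫ ≠ φ y) := fun y hy ↦ (hx y hy).lt_iff_ne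
  simp +contextual only [mem_ofPred_eq, hlt_iff, not_forall, not_not, exists_prop]

end InnerProductSpace

theorem wulffShape_eq_wulffShapeOn_sphere (φ : EuclideanSpace ℝ (Fin 2) → ℝ) :
    WulffShape φ = wulffShapeOn (sphere 0 1) φ := by
  simp only [WulffShape, wulffShapeOn, mem_sphere_zero_iff_norm]

/-- If `φ : ℝ² → ℝ` is continuous, positively 1-homogeneous and positive on the unit
sphere, then a point lies on the frontier of the Wulff shape iff it belongs to `W_φ` and
some defining inequality holds with equality. -/
theorem mem_frontier_wulffShape_iff
    (φ : EuclideanSpace ℝ (Fin 2) → ℝ)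
    (hcont : Continuous φ)
    (hhom : ∀ c : ℝ, 0 < c → ∀ x : EuclideanSpace ℝ (Fin 2), φ (c • x) = c * φ x)
    (hpos : ∀ y : EuclideanSpace ℝ (Fin 2), ‖y‖ = 1 → 0 < φ y) :
    ∀ x : EuclideanSpace ℝ (Fin 2),
      x ∈ frontier (WulffShape φ) ↔
        x ∈ WulffShape φ ∧ ∃ ν : EuclideanSpace ℝ (Fin 2), ‖ν‖ = 1 ∧ ⟪x, ν⟫ = φ ν := by
  simpa only [wulffShape_eq_wulffShapeOn_sphere, mem_sphere_zero_iff_norm] using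
    mem_frontier_wulffShape_iff_general (K := sphere 0 1) (isCompact_sphere 0 1) (by simp)
      (hcont.lowerSemicontinuous.lowerSemicontinuousOn _)
end
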